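/- Define t_k(N) = [Γ(N−k+1)·Γ((N+k)/2 + 1)] / [Γ(N+1)·Γ((N−k)/2 + 1)] for natural numbers 0 ≤ k ≤ N, where Γ is the real Gamma function. Then lim_{N→∞} ∑_{k=0}^{N} t_k(N) = 3. -/

import Mathlib

open Filter

/-!
Write `t_k` for the summand. The functional equation of `Γ` gives the two-step recursion
`4 (N - k - 1) t_{k+2} = (N + k + 2) t_k`, with `t_0 = 1` and `t_1 = (N + 1) / (2 N)`, so that
`t_k → 2^{-k}` for every fixed `k` (`gammaRatio_tendsto`). The last four terms are treated
separately: `t_N = 1`, while `t_{N-1}`, `t_{N-2}`, `t_{N-3}` tend to `0`. Hence the limit is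
`∑ 2^{-k} + 1 = 3` once dominated convergence is justified for the terms with `k ≤ N - 4`.

The dominating bound is `t_k ≤ C / ((k+1)(k+3))` (`gammaRatio_le`). The weighted terms
`s_k = (k+1)(k+3) t_k` satisfy, for `k ≥ 59`, `s_{k+2} ≤ s_k` when `5 k + 17 ≤ 3 N`
and `s_k ≤ s_{k+2}` when `5 k + 16 ≥ 3 N`. So `s_k` is controlled by its values at both ends: at the left end
`t_k ≤ 1`, and at the right end `t_{N-4}` and `t_{N-5}` are `O(N^{-2})`.
-/

/-! ### The summand and its recursion -/

/-- The summand `t_k(N)`; it is only meaningful for `k ≤ N`. -/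
noncomputable def gammaRatio (N k : ℕ) : ℝ :=
  (Real.Gamma ((N : ℝ) - k + 1) * Real.Gamma (((N : ℝ) + k) / 2 + 1)) /
    (Real.Gamma ((N : ℝ) + 1) * Real.Gamma (((N : ℝ) - k) / 2 + 1))

lemma gammaRatio_nonneg {N k : ℕ} (h : k ≤ N) : 0 ≤ gammaRatio N k := by
  have h' : (k : ℝ) ≤ N := by exact_mod_cast h
  have h0 : (0 : ℝ) ≤ k := k.cast_nonneg
  unfold gammaRatio
  have h1 := Real.Gamma_pos_of_pos (s := (N : ℝ) - k + 1) (by linarith)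
  have h2 := Real.Gamma_pos_of_pos (s := ((N : ℝ) + k) / 2 + 1) (by linarith)
  have h3 := Real.Gamma_pos_of_pos (s := (N : ℝ) + 1) (by linarith)
  have h4 := Real.Gamma_pos_of_pos (s := ((N : ℝ) - k) / 2 + 1) (by linarith)
  positivity

lemma gammaRatio_zero (N : ℕ) : gammaRatio N 0 = 1 := by
  have h0 : (0 : ℝ) ≤ N := N.cast_nonneg
  have h3 := Real.Gamma_pos_of_pos (s := (N : ℝ) + 1) (by linarith)
  have h4 := Real.Gamma_pos_of_pos (s := (N : ℝ) / 2 + 1) (by linarith)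
  unfold gammaRatio
  simp only [Nat.cast_zero, sub_zero, add_zero]
  exact div_self (by positivity)

lemma gammaRatio_one {N : ℕ} (hN : 1 ≤ N) : gammaRatio N 1 = (N + 1) / (2 * N) := by
  have h0 : (1 : ℝ) ≤ N := by exact_mod_cast hN
  have h3 := Real.Gamma_pos_of_pos (s := (N : ℝ)) (by linarith)
  have h4 := Real.Gamma_pos_of_pos (s := ((N : ℝ) + 1) / 2) (by linarith)
  unfold gammaRatio
  rw [show (N : ℝ) - (1 : ℕ) + 1 = N by push_cast; ring,
    show ((N : ℝ) - (1 : ℕ)) / 2 + 1 = (N + 1) / 2 by push_cast; ring,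
    Nat.cast_one, Real.Gamma_add_one (by positivity), Real.Gamma_add_one (by positivity)]
  field_simp

lemma gammaRatio_rec {N k : ℕ} (h : k + 2 ≤ N) :
    gammaRatio N (k + 2) * (4 * ((N : ℝ) - k - 1)) = (N + k + 2) * gammaRatio N k := by
  have h' : (k : ℝ) + 2 ≤ N := by exact_mod_cast h
  have h0 : (0 : ℝ) ≤ k := k.cast_nonneg
  have h1 := Real.Gamma_pos_of_pos (s := (N : ℝ) + 1) (by linarith)
  have h2 := Real.Gamma_pos_of_pos (s := ((N : ℝ) - k) / 2) (by linarith)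
  have e1 : Real.Gamma ((N : ℝ) - k + 1) =
      ((N : ℝ) - k) * (((N : ℝ) - k - 1) * Real.Gamma ((N : ℝ) - k - 1)) := by
    rw [Real.Gamma_add_one (by linarith),
      ← Real.Gamma_add_one (s := (N : ℝ) - k - 1) (by linarith), sub_add_cancel]
  have e2 : Real.Gamma (((N : ℝ) + (k + 2 : ℕ)) / 2 + 1) =
      (((N : ℝ) + k) / 2 + 1) * Real.Gamma (((N : ℝ) + k) / 2 + 1) := by
    rw [← Real.Gamma_add_one (by linarith)]
    congr 1; push_cast; ring
  have e3 : Real.Gamma (((N : ℝ) - k) / 2 + 1) =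
      (((N : ℝ) - k) / 2) * Real.Gamma (((N : ℝ) - k) / 2) :=
    Real.Gamma_add_one (by linarith)
  have hne : (N : ℝ) - k ≠ 0 := by linarith
  unfold gammaRatio
  rw [e1, e2, e3, show (N : ℝ) - (k + 2 : ℕ) + 1 = N - k - 1 by push_cast; ring,
    show ((N : ℝ) - (k + 2 : ℕ)) / 2 + 1 = (N - k) / 2 by push_cast; ring]
  field_simp
  ring

/-! ### Terms near the right end -/

/-- The terms counted from the right end, `k = N - j`. -/
lemma gammaRatio_right (m j : ℕ) : gammaRatio (m + j) m =
    Real.Gamma (j + 1) * Real.Gamma ((m : ℝ) + j / 2 + 1) /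
      (Real.Gamma ((m : ℝ) + j + 1) * Real.Gamma ((j : ℝ) / 2 + 1)) := by
  unfold gammaRatio
  push_cast
  rw [show (m : ℝ) + j - m = j by ring, show ((m : ℝ) + j + m) / 2 = m + j / 2 by ring]

lemma gammaRatio_self (N : ℕ) : gammaRatio N N = 1 := by
  have h := gammaRatio_right N 0
  have h0 : (0 : ℝ) ≤ N := N.cast_nonneg
  have h3 := Real.Gamma_pos_of_pos (s := (N : ℝ) + 1) (by linarith)
  simp at h
  rw [h, div_self h3.ne']

/-- Log-convexity: `Γ(x + 1/2)² ≤ Γ(x) Γ(x + 1) = Γ(x + 1)² / x`. -/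
lemma gammaRatio_right_one_le (m : ℕ) :
    gammaRatio (m + 1) m ≤ (1 / Real.Gamma (3 / 2)) * Real.sqrt (1 / ((m : ℝ) + 1)) := by
  have h0 : (0 : ℝ) ≤ m := m.cast_nonneg
  have hx := Real.Gamma_pos_of_pos (s := (m : ℝ) + 1) (by linarith)
  have hx1 := Real.Gamma_pos_of_pos (s := (m : ℝ) + 1 + 1) (by linarith)
  have h32 := Real.Gamma_pos_of_pos (s := (3 / 2 : ℝ)) (by norm_num)
  have key := Real.Gamma_mul_add_mul_le_rpow_Gamma_mul_rpow_Gamma (s := (m : ℝ) + 1)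
    (t := (m : ℝ) + 1 + 1) (a := 1 / 2) (b := 1 / 2) (by linarith) (by linarith)
    (by norm_num) (by norm_num) (by norm_num)
  rw [← Real.sqrt_eq_rpow, ← Real.sqrt_eq_rpow, ← Real.sqrt_mul hx.le] at key
  have hr := gammaRatio_right m 1
  rw [hr]
  push_cast
  rw [show (1 : ℝ) + 1 = 2 by norm_num, Real.Gamma_two, one_mul,
    show (1 : ℝ) / 2 + 1 = 3 / 2 by norm_num,
    show (m : ℝ) + 1 / 2 + 1 = 1 / 2 * (m + 1) + 1 / 2 * (m + 1 + 1) by ring]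
  have e : Real.sqrt (Real.Gamma (m + 1) * Real.Gamma (m + 1 + 1)) =
      Real.Gamma (m + 1 + 1) * Real.sqrt (1 / ((m : ℝ) + 1)) := by
    rw [show Real.Gamma ((m : ℝ) + 1) * Real.Gamma (m + 1 + 1) =
      Real.Gamma (m + 1 + 1) ^ 2 * (1 / ((m : ℝ) + 1)) by
        rw [Real.Gamma_add_one (s := (m : ℝ) + 1) (by linarith)]
        field_simp, Real.sqrt_mul (by positivity), Real.sqrt_sq hx1.le]
  rw [e] at key
  rw [div_le_iff₀ (by positivity)]
  calc _ ≤ _ := key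
    _ = _ := by field_simp

lemma gammaRatio_right_two (m : ℕ) : gammaRatio (m + 2) m = 2 / ((m : ℝ) + 2) := by
  have h0 : (0 : ℝ) ≤ m := m.cast_nonneg
  have h1 := gammaRatio_rec (N := m + 2) (k := m) le_rfl
  rw [gammaRatio_self] at h1
  push_cast at h1
  field_simp
  linarith

lemma gammaRatio_right_three (m : ℕ) : gammaRatio (m + 3) m =
    8 / (2 * (m : ℝ) + 5) * gammaRatio (m + 3) (m + 2) := by
  have h0 : (0 : ℝ) ≤ m := m.cast_nonneg
  have h1 := gammaRatio_rec (N := m + 3) (k := m) (by omega)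
  push_cast at h1
  field_simp
  linarith

lemma gammaRatio_right_four (m : ℕ) :
    gammaRatio (m + 4) m = 12 / (((m : ℝ) + 3) * (m + 4)) := by
  have h0 : (0 : ℝ) ≤ m := m.cast_nonneg
  have h1 := gammaRatio_rec (N := m + 4) (k := m) (by omega)
  have h2 := gammaRatio_right_two (m + 2)
  rw [show m + 2 + 2 = m + 4 by ring] at h2
  rw [h2] at h1
  push_cast at h1
  field_simp at h1 ⊢
  nlinarith

lemma gammaRatio_right_five_le (m : ℕ) :
    gammaRatio (m + 5) m ≤ 120 / (((m : ℝ) + 4) * (m + 5)) := by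
  have h0 : (0 : ℝ) ≤ m := m.cast_nonneg
  have h72 : 1 ≤ Real.Gamma (5 / 2 + 1) := by
    rw [← Real.Gamma_two]
    exact Real.Gamma_strictMonoOn_Ici.monotoneOn (by simp) (by norm_num) (by norm_num)
  have hm : Real.Gamma ((m : ℝ) + 5 / 2 + 1) ≤ Real.Gamma ((m : ℝ) + 4) :=
    Real.Gamma_strictMonoOn_Ici.monotoneOn (by simp; linarith) (by simp; linarith) (by linarith)
  have hx := Real.Gamma_pos_of_pos (s := (m : ℝ) + 4) (by linarith)
  have e6 : Real.Gamma ((5 : ℕ) + 1 : ℝ) = 120 := by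
    rw [Real.Gamma_nat_eq_factorial]; norm_num [Nat.factorial]
  have e : Real.Gamma ((m : ℝ) + 5 + 1) = (m + 5) * ((m + 4) * Real.Gamma (m + 4)) := by
    rw [Real.Gamma_add_one (by linarith),
      ← Real.Gamma_add_one (s := (m : ℝ) + 4) (by linarith)]
    congr 2; ring
  rw [gammaRatio_right, e6]
  push_cast
  rw [e, div_le_div_iff₀ (by positivity) (by positivity)]
  have : Real.Gamma ((m : ℝ) + 5 / 2 + 1) ≤ Real.Gamma ((m : ℝ) + 4) * Real.Gamma (5 / 2 + 1) :=
    hm.trans (le_mul_of_one_le_right hx.le h72)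
  calc _ = 120 * ((m + 4) * (m + 5)) * Real.Gamma ((m : ℝ) + 5 / 2 + 1) := by ring
    _ ≤ 120 * ((m + 4) * (m + 5)) * (Real.Gamma ((m : ℝ) + 4) * Real.Gamma (5 / 2 + 1)) := by
      gcongr
    _ = _ := by ring

/-! ### The dominating bound -/

lemma gammaRatio_le_one {N : ℕ} (hN : 1000 ≤ N) :
    ∀ k : ℕ, k ≤ 100 → gammaRatio N k ≤ 1
  | 0, _ => (gammaRatio_zero N).le
  | 1, _ => by
    have h : (1000 : ℝ) ≤ N := by exact_mod_cast hN
    rw [gammaRatio_one (by omega), div_le_one (by linarith)]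
    linarith
  | k + 2, hk => by
    have ih := gammaRatio_le_one hN k (by omega)
    have hr := gammaRatio_rec (N := N) (k := k) (by omega)
    have h : (1000 : ℝ) ≤ N := by exact_mod_cast hN
    have hk' : (k : ℝ) + 2 ≤ 100 := by exact_mod_cast hk
    have h0 : (0 : ℝ) ≤ k := k.cast_nonneg
    by_contra! hc
    nlinarith

/-- The weighted term, whose boundedness expresses `t_k = O(k^{-2})`. -/
noncomputable def weighted (N k : ℕ) : ℝ := ((k : ℝ) + 1) * (k + 3) * gammaRatio N k

lemma weighted_rec {N k : ℕ} (h : k + 2 ≤ N) :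
    weighted N (k + 2) * (4 * (k + 1) * ((N : ℝ) - k - 1)) =
      (k + 5) * (N + k + 2) * weighted N k := by
  unfold weighted
  have := gammaRatio_rec h
  push_cast
  linear_combination ((k : ℝ) + 3) * (k + 5) * (k + 1) * this

lemma weighted_nonneg {N k : ℕ} (h : k ≤ N) : 0 ≤ weighted N k :=
  mul_nonneg (by positivity) (gammaRatio_nonneg h)

lemma weighted_le_left {N : ℕ} (hN : 1000 ≤ N) (k : ℕ) (hk : 5 * k + 7 ≤ 3 * N) :
    weighted N k ≤ 11000 := by
  induction k using Nat.strong_induction_on with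
  | _ k ih =>
    by_cases h100 : k ≤ 100
    · have h1 := gammaRatio_le_one hN k h100
      have h2 := gammaRatio_nonneg (N := N) (k := k) (by omega)
      have h3 : (k : ℝ) ≤ 100 := by exact_mod_cast h100
      have h0 : (0 : ℝ) ≤ k := k.cast_nonneg
      unfold weighted
      calc _ ≤ ((100 : ℝ) + 1) * (100 + 3) * 1 := by gcongr
        _ ≤ _ := by norm_num
    · obtain ⟨l, rfl⟩ : ∃ l, k = l + 2 := ⟨k - 2, by omega⟩
      have ih' := ih l (by omega) (by omega)
      have hr := weighted_rec (N := N) (k := l) (by omega)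
      have hl : (98 : ℝ) ≤ l := by exact_mod_cast (by omega : 98 ≤ l)
      have hlN : 5 * (l : ℝ) + 17 ≤ 3 * N := by exact_mod_cast (by omega : 5 * l + 17 ≤ 3 * N)
      have hw := weighted_nonneg (N := N) (k := l) (by omega)
      have hineq : ((l : ℝ) + 5) * (N + l + 2) ≤ 4 * (l + 1) * ((N : ℝ) - l - 1) := by
        nlinarith
      have hpos : 0 < 4 * ((l : ℝ) + 1) * ((N : ℝ) - l - 1) := by
        have : 0 < (N : ℝ) - l - 1 := by linarith
        positivity
      refine le_trans ?_ ih'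
      refine le_of_mul_le_mul_right ?_ hpos
      rw [hr, mul_comm (weighted N l)]
      gcongr

lemma weighted_le_right {N : ℕ} (hN : 1000 ≤ N) :
    ∀ i k : ℕ, k + i + 4 = N → 3 * N ≤ 5 * k + 16 → weighted N k ≤ 11000
  | 0, k, h, h3 => by
    subst h
    clear hN h3
    rw [weighted, add_zero, gammaRatio_right_four]
    rw [mul_div_assoc', div_le_iff₀ (by positivity)]
    have h0 : (0 : ℝ) ≤ k := k.cast_nonneg
    nlinarith
  | 1, k, h, h3 => by
    subst h
    clear hN h3
    have h0 : (0 : ℝ) ≤ k := k.cast_nonneg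
    have h1 := gammaRatio_right_five_le k
    rw [weighted, add_assoc]
    refine (mul_le_mul_of_nonneg_left h1 (by positivity)).trans ?_
    rw [mul_div_assoc', div_le_iff₀ (by positivity)]
    nlinarith
  | i + 2, k, h, h3 => by
    have ih := weighted_le_right hN i (k + 2) (by omega) (by omega)
    have hr := weighted_rec (N := N) (k := k) (by omega)
    have hl : (59 : ℝ) ≤ k := by exact_mod_cast (by omega : 59 ≤ k)
    have hlN : 3 * (N : ℝ) ≤ 5 * k + 16 := by exact_mod_cast h3
    have hkN : (k : ℝ) + 2 ≤ N := by exact_mod_cast (by omega : k + 2 ≤ N)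
    have hw := weighted_nonneg (N := N) (k := k + 2) (by omega)
    have hineq : 4 * (k + 1) * ((N : ℝ) - k - 1) ≤ ((k : ℝ) + 5) * (N + k + 2) := by
      nlinarith
    refine le_trans ?_ ih
    refine le_of_mul_le_mul_right ?_ (show 0 < ((k : ℝ) + 5) * (N + k + 2) by positivity)
    rw [mul_comm (weighted N k), ← hr]
    gcongr

lemma gammaRatio_le {N k : ℕ} (hN : 1000 ≤ N) (hk : k + 4 ≤ N) :
    gammaRatio N k ≤ 11000 * (1 / ((k : ℝ) + 1) ^ 2) := by
  have h : weighted N k ≤ 11000 := by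
    by_cases h : 5 * k + 17 ≤ 3 * N
    · exact weighted_le_left hN k (by omega)
    · exact weighted_le_right hN (N - 4 - k) k (by omega) (by omega)
  have h2 := gammaRatio_nonneg (N := N) (k := k) (by omega)
  have h0 : (0 : ℝ) ≤ k := k.cast_nonneg
  rw [mul_one_div, le_div_iff₀ (by positivity)]
  unfold weighted at h
  nlinarith [mul_nonneg h0 h2]

/-! ### Limits -/

lemma gammaRatio_tendsto : ∀ k : ℕ,
    Tendsto (fun N : ℕ => gammaRatio N k) atTop (nhds ((1 / 2 : ℝ) ^ k))
  | 0 => by simp [gammaRatio_zero]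
  | 1 => by
    have h : Tendsto (fun N : ℕ => (1 / 2 : ℝ) + 1 / 2 * (1 / (N : ℝ))) atTop
        (nhds (1 / 2 + 1 / 2 * 0)) :=
      tendsto_const_nhds.add (tendsto_const_nhds.mul tendsto_one_div_atTop_nhds_zero_nat)
    rw [mul_zero, add_zero] at h
    rw [pow_one]
    refine h.congr' ?_
    filter_upwards [eventually_ge_atTop 1] with N hN
    have h0 : (1 : ℝ) ≤ N := by exact_mod_cast hN
    rw [gammaRatio_one hN]
    field_simp
  | k + 2 => by
    have ih := gammaRatio_tendsto k
    have hz := tendsto_one_div_atTop_nhds_zero_nat (𝕜 := ℝ)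
    have hq : Tendsto (fun N : ℕ => (1 + ((k : ℝ) + 2) * (1 / (N : ℝ))) /
        (4 * (1 - ((k : ℝ) + 1) * (1 / (N : ℝ))))) atTop
        (nhds ((1 + ((k : ℝ) + 2) * 0) / (4 * (1 - ((k : ℝ) + 1) * 0)))) :=
      (tendsto_const_nhds.add (tendsto_const_nhds.mul hz)).div
        (tendsto_const_nhds.mul (tendsto_const_nhds.sub (tendsto_const_nhds.mul hz)))
        (by norm_num)
    have h := hq.mul ih
    rw [show (1 + ((k : ℝ) + 2) * 0) / (4 * (1 - ((k : ℝ) + 1) * 0)) * (1 / 2) ^ k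
      = (1 / 2) ^ (k + 2) by ring] at h
    refine h.congr' ?_
    filter_upwards [eventually_ge_atTop (k + 2)] with N hN
    have hr := gammaRatio_rec hN
    have h0 : (k : ℝ) + 2 ≤ N := by exact_mod_cast hN
    have hk : (0 : ℝ) ≤ k := k.cast_nonneg
    have hN0 : (N : ℝ) ≠ 0 := by linarith
    have hd : (N : ℝ) - k - 1 ≠ 0 := by linarith
    rw [show (1 + ((k : ℝ) + 2) * (1 / (N : ℝ))) / (4 * (1 - ((k : ℝ) + 1) * (1 / (N : ℝ))))
      = (N + k + 2) / (4 * (N - k - 1)) by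
        rw [show 1 + ((k : ℝ) + 2) * (1 / (N : ℝ)) = (N + k + 2) / N by field_simp; ring,
          show 4 * (1 - ((k : ℝ) + 1) * (1 / (N : ℝ))) = 4 * (N - k - 1) / N by
            field_simp; ring, div_div_div_cancel_right₀ hN0]]
    rw [div_mul_eq_mul_div, ← hr, mul_div_assoc, div_self (by simpa using hd), mul_one]

lemma tendsto_bulk : Tendsto (fun m : ℕ => ∑ k ∈ Finset.range (m + 1), gammaRatio (m + 4) k)
    atTop (nhds 2) := by
  have hs : Summable (fun k : ℕ => (11000 : ℝ) * (1 / ((k : ℝ) + 1) ^ 2)) := by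
    have := (summable_nat_add_iff 1).mpr (Real.summable_one_div_nat_pow.mpr one_lt_two)
    refine Summable.mul_left _ (this.congr fun k => ?_)
    push_cast
    rfl
  have h := tendsto_tsum_of_dominated_convergence (𝓕 := atTop)
    (f := fun m k : ℕ => if k ∈ Finset.range (m + 1) then gammaRatio (m + 4) k else 0)
    (g := fun k : ℕ => (1 / 2 : ℝ) ^ k) hs ?_ ?_
  · rw [tsum_geometric_two] at h
    refine h.congr fun m => ?_
    rw [tsum_eq_sum (s := Finset.range (m + 1)) (fun k hk => if_neg hk)]
    exact Finset.sum_congr rfl fun k hk => if_pos hk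
  · intro k
    refine ((tendsto_add_atTop_iff_nat 4).mpr (gammaRatio_tendsto k)).congr' ?_
    filter_upwards [eventually_ge_atTop k] with m hm
    rw [if_pos (Finset.mem_range.mpr (by omega))]
  · filter_upwards [eventually_ge_atTop 1000] with m hm k
    split_ifs with hk
    · have := Finset.mem_range.mp hk
      rw [Real.norm_of_nonneg (gammaRatio_nonneg (by omega))]
      exact gammaRatio_le (by omega) (by omega)
    · rw [norm_zero]
      positivity

lemma tendsto_right_one : Tendsto (fun m : ℕ => gammaRatio (m + 1) m) atTop (nhds 0) := by
  have h : Tendsto (fun m : ℕ => (1 / Real.Gamma (3 / 2)) * Real.sqrt (1 / ((m : ℝ) + 1)))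
      atTop (nhds ((1 / Real.Gamma (3 / 2)) * Real.sqrt 0)) :=
    tendsto_const_nhds.mul tendsto_one_div_add_atTop_nhds_zero_nat.sqrt
  rw [Real.sqrt_zero, mul_zero] at h
  exact squeeze_zero (fun m => gammaRatio_nonneg (by omega)) gammaRatio_right_one_le h

lemma tendsto_right_two : Tendsto (fun m : ℕ => gammaRatio (m + 2) m) atTop (nhds 0) := by
  simp_rw [gammaRatio_right_two]
  exact tendsto_const_nhds.div_atTop
    (tendsto_atTop_add_const_right _ _ tendsto_natCast_atTop_atTop)

lemma tendsto_right_three : Tendsto (fun m : ℕ => gammaRatio (m + 3) m) atTop (nhds 0) := by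
  simp_rw [gammaRatio_right_three]
  have h1 : Tendsto (fun m : ℕ => 8 / (2 * (m : ℝ) + 5)) atTop (nhds 0) :=
    tendsto_const_nhds.div_atTop (tendsto_atTop_add_const_right _ _
      (tendsto_natCast_atTop_atTop.const_mul_atTop (by norm_num)))
  have h2 := h1.mul ((tendsto_add_atTop_iff_nat 2).mpr tendsto_right_one)
  rw [mul_zero] at h2
  exact h2

/-- With `t_k(N) = Γ(N−k+1)·Γ((N+k)/2+1) / (Γ(N+1)·Γ((N−k)/2+1))` for `0 ≤ k ≤ N`,
the sums `∑_{k=0}^{N} t_k(N)` converge to `3` as `N → ∞`. -/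
theorem sum_gamma_ratio_tendsto_three :
    Tendsto (fun N : ℕ =>
        ∑ k ∈ Finset.range (N + 1),
          (Real.Gamma ((N : ℝ) - k + 1) * Real.Gamma (((N : ℝ) + k) / 2 + 1)) /
            (Real.Gamma ((N : ℝ) + 1) * Real.Gamma (((N : ℝ) - k) / 2 + 1)))
      atTop (nhds 3) := by
  change Tendsto (fun N : ℕ => ∑ k ∈ Finset.range (N + 1), gammaRatio N k) atTop (nhds 3)
  rw [← tendsto_add_atTop_iff_nat 4]
  have h3 := (tendsto_add_atTop_iff_nat 1).mpr tendsto_right_three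
  have h2 := (tendsto_add_atTop_iff_nat 2).mpr tendsto_right_two
  have h1 := (tendsto_add_atTop_iff_nat 3).mpr tendsto_right_one
  have h := (((tendsto_bulk.add h3).add h2).add h1).add (tendsto_const_nhds (x := (1 : ℝ)))
  rw [show (2 : ℝ) + 0 + 0 + 0 + 1 = 3 by norm_num] at h
  refine h.congr fun m => ?_
  rw [Finset.sum_range_succ _ (m + 4), Finset.sum_range_succ _ (m + 3),
    Finset.sum_range_succ _ (m + 2), Finset.sum_range_succ _ (m + 1), gammaRatio_self]
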